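/- Let 0 < a < 1 < A. There exists a constant T > 0, depending only on a and A, with the following property: for all radial non-increasing weights u₀, u₁ on 𝔻 each satisfying (LOG 1) and (LOG 2) with constants a, A, for all c₀, c₁ > 0, and for every holomorphic function f on 𝔻 with |f(z)| ≤ max(c₀/u₀(z), c₁/u₁(z)) for all z ∈ 𝔻, there exist holomorphic functions h₀, h₁ on 𝔻 with f = h₀ + h₁, sup_{z∈𝔻} u₀(z)|h₀(z)| ≤ T·c₀ and sup_{z∈𝔻} u₁(z)|h₁(z)| ≤ T·c₁. -/

import Mathlib

noncomputable section

open Complex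

/-- The open unit disc in ℂ. -/
def uD : Set ℂ := {z : ℂ | ‖z‖ < 1}

/-- Holomorphic on the unit disc. -/
def Holo (f : ℂ → ℂ) : Prop := DifferentiableOn ℂ f uD

/-- A weight on 𝔻: continuous and strictly positive. -/
def IsWeight (v : ℂ → ℝ) : Prop :=
  ContinuousOn v uD ∧ ∀ z ∈ uD, 0 < v z

/-- Radial weight. -/
def Radial (v : ℂ → ℝ) : Prop :=
  ∀ z ∈ uD, ∀ w ∈ uD, ‖z‖ = ‖w‖ → v z = v w

/-- Non-increasing in the modulus. -/
def NonInc (v : ℂ → ℝ) : Prop :=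
  ∀ z ∈ uD, ∀ w ∈ uD, ‖z‖ ≤ ‖w‖ → v w ≤ v z

/-- r₀ = 0, r_κ = 1 - 2^(-2^κ) for κ ≥ 1. -/
def rseq (κ : ℕ) : ℝ := if κ = 0 then 0 else 1 - 1 / 2 ^ (2 ^ κ)

/-- Condition (LOG 1) for a single radial weight. -/
def Log1 (A : ℝ) (v : ℂ → ℝ) : Prop :=
  ∀ κ : ℕ, v (rseq κ : ℂ) ≤ A * v (rseq (κ + 1) : ℂ)

/-- Condition (LOG 2) for a single radial weight. -/
def Log2 (a : ℝ) (v : ℂ → ℝ) : Prop :=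
  ∀ κ : ℕ, v (rseq (κ + 1) : ℂ) ≤ a * v (rseq κ : ℂ)

/-- The weight tends to 0 as |z| → 1. -/
def VanishAtOne (v : ℂ → ℝ) : Prop :=
  ∀ ε > 0, ∃ r : ℝ, r < 1 ∧ ∀ z ∈ uD, r ≤ ‖z‖ → v z ≤ ε

/-- Associated growth function w~ of a growth condition w. -/
def growthTilde (w : ℂ → ℝ) (z : ℂ) : ℝ :=
  sSup {t : ℝ | ∃ g : ℂ → ℂ, Holo g ∧ (∀ x ∈ uD, ‖g x‖ ≤ w x) ∧ t = ‖g z‖}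

/-- Associated weight ṽ = 1/(1/v)~. -/
def assocWeight (v : ℂ → ℝ) (z : ℂ) : ℝ := (growthTilde (fun x => 1 / v x) z)⁻¹

/-- Monotonicity of the double sequence: decreasing in n, increasing in N. -/
def MonoSeq (a : ℕ → ℕ → ℂ → ℝ) : Prop :=
  ∀ N n, ∀ z ∈ uD, a N (n + 1) z ≤ a N n z ∧ a N n z ≤ a (N + 1) n z

/-- Condition (LOG) for a double sequence with constants 0 < a < 1 < A. -/
def SeqLOG (aa A : ℝ) (a : ℕ → ℕ → ℂ → ℝ) : Prop :=
  ∀ N n, Radial (a N n) ∧ NonInc (a N n) ∧ VanishAtOne (a N n) ∧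
    Log1 A (a N n) ∧ Log2 aa (a N n)

/-- Condition (Q). -/
def CondQ (a : ℕ → ℕ → ℂ → ℝ) : Prop :=
  ∀ N, ∃ M ≥ N, ∃ n, ∀ K ≥ M, ∀ m, ∀ ε > 0, ∃ k, ∃ S > 0,
    ∀ z ∈ uD, 1 / a M m z ≤ max (ε / a N n z) (S / a K k z)

/-- Condition (wQ). -/
def CondwQ (a : ℕ → ℕ → ℂ → ℝ) : Prop :=
  ∀ N, ∃ M ≥ N, ∃ n, ∀ K ≥ M, ∀ m, ∃ k, ∃ S > 0,
    ∀ z ∈ uD, 1 / a M m z ≤ max (S / a N n z) (S / a K k z)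

/-- Condition (Q)~. -/
def CondQTilde (a : ℕ → ℕ → ℂ → ℝ) : Prop :=
  ∀ N, ∃ M ≥ N, ∃ n, ∀ K ≥ M, ∀ m, ∀ ε > 0, ∃ k, ∃ S > 0,
    ∀ z ∈ uD, growthTilde (fun x => 1 / a M m x) z ≤
      growthTilde (fun x => max (ε / a N n x) (S / a K k x)) z

/-- Pointwise maximum max_{N=1,…,L} a_{N,n(N)}. -/
def finMax (a : ℕ → ℕ → ℂ → ℝ) (nn : ℕ → ℕ) (L : ℕ) (z : ℂ) : ℝ :=
  sSup {t : ℝ | ∃ N, 1 ≤ N ∧ N ≤ L ∧ t = a N (nn N) z}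

/-- Condition (B). -/
def CondB (a : ℕ → ℕ → ℂ → ℝ) : Prop :=
  ∀ nn : ℕ → ℕ, ∃ m, ∀ M, ∃ L, 1 ≤ L ∧ ∃ c > 0,
    ∀ z ∈ uD, a M m z ≤ c * finMax a nn L z

/-- Condition (B)~. -/
def CondBTilde (a : ℕ → ℕ → ℂ → ℝ) : Prop :=
  ∀ nn : ℕ → ℕ, ∃ m, ∀ M, ∃ L, 1 ≤ L ∧ ∃ c > 0,
    ∀ z ∈ uD, assocWeight (a M m) z ≤ c * assocWeight (finMax a nn L) z

/-- A weight is essential. -/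
def Essential (v : ℂ → ℝ) : Prop :=
  ∃ C > 0, ∀ z ∈ uD,
    growthTilde (fun x => 1 / v x) z ≤ 1 / v z ∧
    1 / v z ≤ C * growthTilde (fun x => 1 / v x) z

/-- Condition (Σ). -/
def CondSigma (a : ℕ → ℕ → ℂ → ℝ) : Prop :=
  ∀ N, ∃ K ≥ N, ∀ k, ∃ n ≥ k, ∀ ε > 0, ∃ Q : Set ℂ,
    IsCompact Q ∧ Q ⊆ uD ∧ ∀ z ∈ uD \ Q, a N n z / a K k z ≤ ε

/-- The Banach space Ha(𝔻) as a set of functions. -/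
def HaSet (v : ℂ → ℝ) : Set (ℂ → ℂ) :=
  {f | Holo f ∧ ∃ C : ℝ, ∀ z ∈ uD, v z * ‖f z‖ ≤ C}

/-!
Telescoping the dilates `z ↦ f (r_k z)` writes `f` as a series of blocks
`f (r_k z) - f (r_{k-1} z)`. The `k`-th block goes into `h₀` or `h₁` according to which of the two
bounds `c₀ / u₀`, `c₁ / u₁` is larger on the circle of radius `r_k`: since both bounds increase with
the modulus, the value of the larger one at `r_k` controls `f` on the whole disc of radius `r_k`.

At a point with `‖z‖ ≤ r_{n+1}`, the blocks with `k ≤ n` are at most twice the bound at `r_k`, and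
by (LOG 2) they add up to a geometric series dominated by the bound at `r_n`. For `k > n`, (LOG 1)
lets the bound grow by a power of `A`, but the Cauchy estimate for the derivative makes the block
smaller by a doubly exponential factor, because `r_k - r_{k-1}` is tiny compared with
`r_k - r_{n+1}`.
-/

section Preliminaries

open Metric Nat

theorem norm_sub_le_of_norm_le_of_closedBall_subset {E : Type*} [NormedAddCommGroup E]
    [NormedSpace ℂ E] {f : ℂ → E} {s K : Set ℂ} {M δ : ℝ} (hf : DifferentiableOn ℂ f s)
    (hM : ∀ w ∈ s, ‖f w‖ ≤ M) (hK : Convex ℝ K) (hδ : 0 < δ)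
    (hKs : ∀ w ∈ K, closedBall w δ ⊆ s) {x y : ℂ} (hx : x ∈ K) (hy : y ∈ K) :
    ‖f y - f x‖ ≤ M / δ * ‖y - x‖ := by
  refine hK.norm_image_sub_le_of_norm_deriv_le (𝕜 := ℂ) (fun w hw => ?_) (fun w hw => ?_) hx hy
  · exact hf.differentiableAt (Filter.mem_of_superset (closedBall_mem_nhds w hδ) (hKs w hw))
  · exact norm_deriv_le_of_forall_mem_sphere_norm_le hδ
      ((hf.mono (hKs w hw)).diffContOnCl_ball subset_rfl)
      fun v hv => hM v (hKs w hw (sphere_subset_closedBall hv))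

theorem factorial_le_two_pow_two_pow (n : ℕ) : n ! ≤ 2 ^ 2 ^ n := by
  induction n with
  | zero => simp
  | succ n ih =>
    have hn : n + 1 ≤ 2 ^ 2 ^ n := (n.lt_two_pow_self).trans_le (Nat.lt_two_pow_self).le
    calc (n + 1)! = (n + 1) * n ! := factorial_succ n
      _ ≤ 2 ^ 2 ^ n * 2 ^ 2 ^ n := Nat.mul_le_mul hn ih
      _ = 2 ^ 2 ^ (n + 1) := by rw [← pow_add, ← two_mul, ← pow_succ']

end Preliminaries

section Radii

open Metric Filter Topology

theorem isOpen_uD : IsOpen uD := isOpen_lt continuous_norm continuous_const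

theorem rseq_zero : rseq 0 = 0 := if_pos rfl

theorem one_sub_rseq_succ (k : ℕ) : 1 - rseq (k + 1) = 1 / 2 ^ 2 ^ (k + 1) := by
  simp [rseq]

theorem rseq_lt_one (k : ℕ) : rseq k < 1 := by
  cases k with
  | zero => simp [rseq_zero]
  | succ k =>
    have : 0 < 1 - rseq (k + 1) := by rw [one_sub_rseq_succ]; positivity
    linarith

theorem two_mul_one_sub_rseq_succ_le (k : ℕ) : 2 * (1 - rseq (k + 1)) ≤ 1 - rseq k := by
  rw [one_sub_rseq_succ]
  cases k with
  | zero => norm_num [rseq_zero]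
  | succ k =>
    have hexp : 2 ^ (k + 1) + 1 ≤ 2 ^ (k + 1 + 1) := Nat.pow_lt_pow_right one_lt_two (by lia)
    have hpow : (2 : ℝ) ^ 2 ^ (k + 1) * 2 ≤ 2 ^ 2 ^ (k + 1 + 1) := by
      rw [← pow_succ]
      exact pow_le_pow_right₀ one_le_two hexp
    rw [one_sub_rseq_succ, mul_one_div, div_le_div_iff₀ (by positivity) (by positivity)]
    linarith

theorem rseq_strictMono : StrictMono rseq :=
  strictMono_nat_of_lt_succ fun k => by
    linarith [two_mul_one_sub_rseq_succ_le k, rseq_lt_one (k + 1)]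

theorem rseq_nonneg (k : ℕ) : 0 ≤ rseq k :=
  rseq_zero.symm.trans_le (rseq_strictMono.monotone k.zero_le)

theorem tendsto_rseq : Tendsto rseq atTop (𝓝 1) := by
  rw [← tendsto_add_atTop_iff_nat 1]
  have hexp : Tendsto (fun k : ℕ => 2 ^ (k + 1)) atTop atTop :=
    (tendsto_pow_atTop_atTop_of_one_lt one_lt_two).comp (tendsto_add_atTop_nat 1)
  have hgap : Tendsto (fun k => 1 - rseq (k + 1)) atTop (𝓝 0) := by
    simpa [one_sub_rseq_succ, Function.comp_def] using
      (tendsto_pow_atTop_nhds_zero_of_lt_one (r := (2⁻¹ : ℝ)) (by norm_num) (by norm_num)).comp hexp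
  simpa using hgap.const_sub 1

theorem norm_rseq (k : ℕ) : ‖(rseq k : ℂ)‖ = rseq k :=
  (norm_real _).trans (Real.norm_of_nonneg (rseq_nonneg k))

theorem rseq_mem_uD (k : ℕ) : (rseq k : ℂ) ∈ uD :=
  (norm_rseq k).trans_lt (rseq_lt_one k)

theorem mem_uD_of_norm_le_rseq {k : ℕ} {z : ℂ} (hz : ‖z‖ ≤ rseq k) : z ∈ uD :=
  hz.trans_lt (rseq_lt_one k)

theorem norm_rseq_mul_le_norm (k : ℕ) (z : ℂ) : ‖(rseq k : ℂ) * z‖ ≤ ‖z‖ := by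
  rw [norm_mul, norm_rseq]
  exact mul_le_of_le_one_left (norm_nonneg z) (rseq_lt_one k).le

theorem norm_rseq_mul_le_rseq (k : ℕ) {z : ℂ} (hz : z ∈ uD) : ‖(rseq k : ℂ) * z‖ ≤ rseq k := by
  rw [norm_mul, norm_rseq]
  exact mul_le_of_le_one_right (rseq_nonneg k) (show ‖z‖ < 1 from hz).le

theorem exists_rseq_le_norm_lt_rseq_succ {z : ℂ} (hz : z ∈ uD) :
    ∃ n, rseq n ≤ ‖z‖ ∧ ‖z‖ < rseq (n + 1) := by
  simpa only [not_lt] using Nat.exists_not_and_succ_of_not_zero_of_exists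
    (p := fun n => ‖z‖ < rseq n) (by simp [rseq_zero])
    (tendsto_rseq.eventually (lt_mem_nhds hz)).exists

theorem rseq_sub_div_rseq_sub_le (n j : ℕ) :
    (rseq (n + j + 2) - rseq (n + j + 1)) / (rseq (n + j + 2) - rseq (n + 1)) ≤
      8 / 2 ^ 2 ^ (j + 1) := by
  have hnum : rseq (n + j + 2) - rseq (n + j + 1) ≤ 1 / 2 ^ 2 ^ (n + j + 1) := by
    rw [← one_sub_rseq_succ]
    linarith [rseq_lt_one (n + j + 2)]
  have hden : 1 / 2 ^ 2 ^ (n + 1) / 2 ≤ rseq (n + j + 2) - rseq (n + 1) := by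
    rw [← one_sub_rseq_succ]
    linarith [two_mul_one_sub_rseq_succ_le (n + 1),
      rseq_strictMono.monotone (show n + 2 ≤ n + j + 2 by lia)]
  have hexp : 2 ^ (n + 1) + 2 ^ (j + 1) ≤ 2 ^ (n + j + 1) + 2 := by
    have hprod : 1 * 2 ^ n + 2 ^ j * 1 ≤ 1 * 1 + 2 ^ j * 2 ^ n :=
      mul_add_mul_le_mul_add_mul Nat.one_le_two_pow Nat.one_le_two_pow
    grind
  have hpow : (2 : ℝ) ^ 2 ^ (n + 1) * 2 ^ 2 ^ (j + 1) ≤ 2 ^ 2 ^ (n + j + 1) * 2 ^ 2 := by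
    rw [← pow_add, ← pow_add]
    exact pow_le_pow_right₀ one_le_two hexp
  calc _ ≤ (1 / 2 ^ 2 ^ (n + j + 1)) / (1 / 2 ^ 2 ^ (n + 1) / 2 : ℝ) := by gcongr
    _ = 2 * 2 ^ 2 ^ (n + 1) / 2 ^ 2 ^ (n + j + 1) := by field_simp
    _ ≤ 8 / 2 ^ 2 ^ (j + 1) := by
      rw [div_le_div_iff₀ (by positivity) (by positivity)]
      linarith

theorem holo_of_differentiableOn_ball_rseq {g : ℂ → ℂ}
    (hg : ∀ n, DifferentiableOn ℂ g (ball 0 (rseq (n + 1)))) : Holo g := by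
  intro z hz
  obtain ⟨n, -, hn⟩ := exists_rseq_le_norm_lt_rseq_succ hz
  exact ((hg n).differentiableAt
    (isOpen_ball.mem_nhds (mem_ball_zero_iff.2 hn))).differentiableWithinAt

end Radii

section DilationBlocks

open Metric Filter Topology Nat

/-- The increments of the sequence of dilates `z ↦ f (r_k z)`, the first one being the dilate of
index `0` itself, so that the blocks up to index `n` add up to `f (r_n z)`. -/
def dilationBlock (f : ℂ → ℂ) : ℕ → ℂ → ℂ
  | 0, z => f (rseq 0 * z)
  | k + 1, z => f (rseq (k + 1) * z) - f (rseq k * z)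

variable {f : ℂ → ℂ} {M : ℝ}

theorem sum_range_succ_dilationBlock (f : ℂ → ℂ) (z : ℂ) (n : ℕ) :
    ∑ k ∈ Finset.range (n + 1), dilationBlock f k z = f (rseq n * z) := by
  induction n with
  | zero => simp [dilationBlock]
  | succ n ih => rw [Finset.sum_range_succ, ih, dilationBlock, add_sub_cancel]

theorem Holo.dilate (hf : Holo f) (k : ℕ) : Holo fun z => f (rseq k * z) :=
  hf.comp (differentiableOn_id.const_mul _) fun z hz =>
    (norm_rseq_mul_le_norm k z).trans_lt hz

theorem holo_dilationBlock (hf : Holo f) : ∀ k, Holo (dilationBlock f k)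
  | 0 => hf.dilate 0
  | k + 1 => (hf.dilate (k + 1)).sub (hf.dilate k)

theorem Holo.eq_of_hasSum_dilationBlock (hf : Holo f) {z s : ℂ} (hz : z ∈ uD)
    (hs : HasSum (fun k => dilationBlock f k z) s) : f z = s := by
  have hdilate : Tendsto (fun n => (rseq n : ℂ) * z) atTop (𝓝 z) := by
    simpa using ((continuous_ofReal.tendsto 1).comp tendsto_rseq).mul_const z
  have hlim : Tendsto (fun n => f (rseq n * z)) atTop (𝓝 (f z)) :=
    (hf.differentiableAt (isOpen_uD.mem_nhds hz)).continuousAt.tendsto.comp hdilate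
  have hsum := (tendsto_add_atTop_iff_nat 1).2 hs.tendsto_sum_nat
  simp only [sum_range_succ_dilationBlock] at hsum
  exact tendsto_nhds_unique hlim hsum

theorem norm_dilationBlock_le {k : ℕ} (hM : ∀ w, ‖w‖ ≤ rseq k → ‖f w‖ ≤ M) {z : ℂ}
    (hz : z ∈ uD) : ‖dilationBlock f k z‖ ≤ 2 * M := by
  have hk : ‖f (rseq k * z)‖ ≤ M := hM _ (norm_rseq_mul_le_rseq k hz)
  cases k with
  | zero => linarith [norm_nonneg (f (rseq 0 * z)), show ‖dilationBlock f 0 z‖ ≤ M from hk]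
  | succ k =>
    have hpred : ‖f (rseq k * z)‖ ≤ M :=
      hM _ ((norm_rseq_mul_le_rseq k hz).trans (rseq_strictMono k.lt_succ_self).le)
    exact (norm_sub_le_of_le hk hpred).trans_eq (two_mul M).symm

theorem Holo.norm_dilationBlock_succ_le (hf : Holo f) {n k : ℕ} (hnk : n < k + 1)
    (hM : ∀ w, ‖w‖ ≤ rseq (k + 1) → ‖f w‖ ≤ M) {z : ℂ} (hz : ‖z‖ ≤ rseq n) :
    ‖dilationBlock f (k + 1) z‖ ≤
      M * ((rseq (k + 1) - rseq k) / (rseq (k + 1) - rseq n)) := by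
  have hδ : 0 < rseq (k + 1) - rseq n := sub_pos.2 (rseq_strictMono hnk)
  have hM0 : 0 ≤ M := (norm_nonneg _).trans (hM 0 (by simpa using rseq_nonneg (k + 1)))
  have hmem : ∀ i, (rseq i : ℂ) * z ∈ closedBall (0 : ℂ) (rseq n) := fun i =>
    mem_closedBall_zero_iff.2 ((norm_rseq_mul_le_norm i z).trans hz)
  have hlip := norm_sub_le_of_norm_le_of_closedBall_subset
    (hf.mono fun w hw => mem_uD_of_norm_le_rseq (mem_closedBall_zero_iff.1 hw))
    (fun w hw => hM w (mem_closedBall_zero_iff.1 hw)) (convex_closedBall 0 (rseq n)) hδ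
    (fun w hw => closedBall_subset_closedBall' (by linarith [mem_closedBall.1 hw]))
    (hmem k) (hmem (k + 1))
  have hstep : ‖(rseq (k + 1) : ℂ) * z - rseq k * z‖ ≤ rseq (k + 1) - rseq k := by
    have hpos := sub_nonneg.2 (rseq_strictMono k.lt_succ_self).le
    rw [← sub_mul, norm_mul, ← ofReal_sub, norm_real, Real.norm_of_nonneg hpos]
    exact mul_le_of_le_one_right hpos (mem_uD_of_norm_le_rseq hz).le
  calc _ ≤ M / (rseq (k + 1) - rseq n) * (rseq (k + 1) - rseq k) :=
        hlip.trans (by gcongr)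
    _ = M * ((rseq (k + 1) - rseq k) / (rseq (k + 1) - rseq n)) := by ring

theorem Holo.norm_dilationBlock_add_le (hf : Holo f) (n j : ℕ)
    (hM : ∀ w, ‖w‖ ≤ rseq (j + (n + 1)) → ‖f w‖ ≤ M) {z : ℂ} (hz : ‖z‖ ≤ rseq (n + 1)) :
    ‖dilationBlock f (j + (n + 1)) z‖ ≤ M * (8 / j !) := by
  have hM0 : 0 ≤ M := (norm_nonneg _).trans (hM 0 (by simpa using rseq_nonneg _))
  cases j with
  | zero =>
    refine (norm_dilationBlock_le hM (mem_uD_of_norm_le_rseq hz)).trans ?_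
    norm_num
    linarith
  | succ j =>
    rw [show j + 1 + (n + 1) = n + j + 1 + 1 by ring] at hM ⊢
    refine (hf.norm_dilationBlock_succ_le (by lia) hM hz).trans ?_
    refine mul_le_mul_of_nonneg_left ((rseq_sub_div_rseq_sub_le n j).trans ?_) hM0
    gcongr
    exact_mod_cast factorial_le_two_pow_two_pow (j + 1)

end DilationBlocks

section Majorant

open Nat

/-- A growth condition sampled on the circles of radii `r_k`: the sequence `k ↦ c / u (r_k)` for a
weight `u` satisfying (LOG 1) with constant `A` and (LOG 2) with constant `a`. -/
structure LogGrowth (a A : ℝ) (M : ℕ → ℝ) : Prop where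
  nonneg : ∀ k, 0 ≤ M k
  le_mul_succ : ∀ k, M k ≤ a * M (k + 1)
  succ_le_mul : ∀ k, M (k + 1) ≤ A * M k

/-- The bound, relative to the growth condition at `r_n`, for the `k`-th dilation block on the disc
of radius `r_{n+1}`. -/
def blockMajorant (a A : ℝ) (n k : ℕ) : ℝ :=
  if k ≤ n then 2 * a ^ (n - k) else A ^ (k - n) * (8 / (k - (n + 1))!)

/-- The constant of the decomposition theorem: the sum of the geometric and the exponential series
that dominate the two parts of `blockMajorant`. -/
def decompositionBound (a A : ℝ) : ℝ := 2 / (1 - a) + 8 * A * Real.exp A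

variable {a A : ℝ} {M : ℕ → ℝ}

theorem LogGrowth.le_pow_mul (h : LogGrowth a A M) (ha : 0 ≤ a) {k n : ℕ} (hkn : k ≤ n) :
    M k ≤ a ^ (n - k) * M n := by
  have hgeom := le_geom (u := fun i => M (n - i)) ha (n - k) fun i hi => by
    simpa [show n - (i + 1) + 1 = n - i by lia] using h.le_mul_succ (n - (i + 1))
  simpa [Nat.sub_sub_self hkn] using hgeom

theorem LogGrowth.add_le_pow_mul (h : LogGrowth a A M) (hA : 0 ≤ A) (n j : ℕ) :
    M (n + j) ≤ A ^ j * M n :=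
  le_geom (u := fun i => M (n + i)) hA j fun i _ => h.succ_le_mul (n + i)

theorem decompositionBound_pos (ha : a < 1) (hA : 0 ≤ A) : 0 < decompositionBound a A := by
  have : 0 < 1 - a := sub_pos.2 ha
  unfold decompositionBound
  positivity

theorem blockMajorant_nonneg (ha : 0 ≤ a) (hA : 0 ≤ A) (n k : ℕ) : 0 ≤ blockMajorant a A n k := by
  unfold blockMajorant
  split_ifs <;> positivity

theorem hasSum_blockMajorant_add (a A : ℝ) (n : ℕ) :
    HasSum (fun j => blockMajorant a A n (j + (n + 1))) (8 * A * Real.exp A) := by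
  have hexp := (NormedSpace.expSeries_div_hasSum_exp A).mul_left (8 * A)
  rw [← Real.exp_eq_exp_ℝ] at hexp
  refine hexp.congr_fun fun j => ?_
  rw [blockMajorant, if_neg (by lia), show j + (n + 1) - n = j + 1 by lia, Nat.add_sub_cancel]
  ring

theorem summable_blockMajorant (a A : ℝ) (n : ℕ) : Summable (blockMajorant a A n) :=
  (summable_nat_add_iff (n + 1)).1 (hasSum_blockMajorant_add a A n).summable

theorem tsum_blockMajorant_le (ha0 : 0 ≤ a) (ha1 : a < 1) (A : ℝ) (n : ℕ) :
    ∑' k, blockMajorant a A n k ≤ decompositionBound a A := by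
  have hhead : ∑ k ∈ Finset.range (n + 1), blockMajorant a A n k ≤ 2 / (1 - a) :=
    calc ∑ k ∈ Finset.range (n + 1), blockMajorant a A n k
      _ = ∑ k ∈ Finset.range (n + 1), 2 * a ^ (n + 1 - 1 - k) :=
        Finset.sum_congr rfl fun k hk => if_pos (Finset.mem_range_succ_iff.1 hk)
      _ = 2 * ∑ k ∈ Finset.range (n + 1), a ^ k := by
        rw [Finset.sum_range_reflect (fun k => 2 * a ^ k), Finset.mul_sum]
      _ ≤ 2 * (1 - a)⁻¹ := by
        gcongr
        exact sum_le_hasSum _ (fun k _ => by positivity) (hasSum_geometric_of_lt_one ha0 ha1)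
      _ = 2 / (1 - a) := (div_eq_mul_inv _ _).symm
  rw [← (summable_blockMajorant a A n).sum_add_tsum_nat_add (n + 1),
    (hasSum_blockMajorant_add a A n).tsum_eq]
  exact add_le_add_left hhead _

end Majorant

section DilationParts

open Metric

/-- The part of the telescoping series of dilates of `f` formed by the blocks with index in `S`. -/
def dilationPart (f : ℂ → ℂ) (S : Set ℕ) (z : ℂ) : ℂ :=
  ∑' k, S.indicator (fun k => dilationBlock f k z) k

variable {f : ℂ → ℂ} {a A : ℝ} {M : ℕ → ℝ} {S : Set ℕ}

theorem Holo.eq_dilationPart_add_compl (hf : Holo f) {z : ℂ} (hz : z ∈ uD)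
    (hS : Summable (S.indicator fun k => dilationBlock f k z))
    (hSc : Summable (Sᶜ.indicator fun k => dilationBlock f k z)) :
    f z = dilationPart f S z + dilationPart f Sᶜ z := by
  refine hf.eq_of_hasSum_dilationBlock hz ?_
  simpa only [dilationPart, Set.indicator_self_add_compl_apply] using hS.hasSum.add hSc.hasSum

theorem LogGrowth.norm_dilationBlock_le_blockMajorant (h : LogGrowth a A M) (ha : 0 ≤ a)
    (hA : 0 ≤ A) (hf : Holo f) {n k : ℕ} (hM : ∀ w, ‖w‖ ≤ rseq k → ‖f w‖ ≤ M k) {z : ℂ}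
    (hz : ‖z‖ ≤ rseq (n + 1)) : ‖dilationBlock f k z‖ ≤ M n * blockMajorant a A n k := by
  unfold blockMajorant
  split_ifs with hkn
  · calc _ ≤ 2 * M k := norm_dilationBlock_le hM (mem_uD_of_norm_le_rseq hz)
      _ ≤ 2 * (a ^ (n - k) * M n) := by gcongr; exact h.le_pow_mul ha hkn
      _ = M n * (2 * a ^ (n - k)) := by ring
  · obtain ⟨j, rfl⟩ := Nat.exists_eq_add_of_le' (Nat.lt_of_not_le hkn)
    rw [show j + n.succ - n = j + 1 by lia, Nat.add_sub_cancel]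
    calc _ ≤ M (j + (n + 1)) * (8 / j.factorial) := hf.norm_dilationBlock_add_le n j hM hz
      _ ≤ A ^ (j + 1) * M n * (8 / j.factorial) := by
        gcongr
        rw [show j + (n + 1) = n + (j + 1) by ring]
        exact h.add_le_pow_mul hA n (j + 1)
      _ = M n * (A ^ (j + 1) * (8 / j.factorial)) := by ring

theorem LogGrowth.norm_indicator_dilationBlock_le (h : LogGrowth a A M) (ha : 0 ≤ a) (hA : 0 ≤ A)
    (hf : Holo f) (hM : ∀ k ∈ S, ∀ w, ‖w‖ ≤ rseq k → ‖f w‖ ≤ M k) {n : ℕ} {z : ℂ}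
    (hz : ‖z‖ ≤ rseq (n + 1)) (k : ℕ) :
    ‖S.indicator (fun k => dilationBlock f k z) k‖ ≤ M n * blockMajorant a A n k := by
  by_cases hk : k ∈ S
  · rw [Set.indicator_of_mem hk]
    exact h.norm_dilationBlock_le_blockMajorant ha hA hf (hM k hk) hz
  · rw [Set.indicator_of_notMem hk, norm_zero]
    exact mul_nonneg (h.nonneg n) (blockMajorant_nonneg ha hA n k)

theorem LogGrowth.summable_indicator_dilationBlock (h : LogGrowth a A M) (ha : 0 ≤ a) (hA : 0 ≤ A)
    (hf : Holo f) (hM : ∀ k ∈ S, ∀ w, ‖w‖ ≤ rseq k → ‖f w‖ ≤ M k) {z : ℂ} (hz : z ∈ uD) :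
    Summable (S.indicator fun k => dilationBlock f k z) := by
  obtain ⟨n, -, hn⟩ := exists_rseq_le_norm_lt_rseq_succ hz
  exact .of_norm_bounded ((summable_blockMajorant a A n).mul_left (M n))
    (h.norm_indicator_dilationBlock_le ha hA hf hM hn.le)

theorem LogGrowth.holo_dilationPart (h : LogGrowth a A M) (ha : 0 ≤ a) (hA : 0 ≤ A)
    (hf : Holo f) (hM : ∀ k ∈ S, ∀ w, ‖w‖ ≤ rseq k → ‖f w‖ ≤ M k) :
    Holo (dilationPart f S) := by
  refine holo_of_differentiableOn_ball_rseq fun n => ?_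
  refine differentiableOn_tsum_of_summable_norm ((summable_blockMajorant a A n).mul_left (M n))
    (fun k => ?_) isOpen_ball fun k w hw =>
      h.norm_indicator_dilationBlock_le ha hA hf hM (mem_ball_zero_iff.1 hw).le k
  by_cases hk : k ∈ S
  · simp only [Set.indicator_of_mem hk]
    exact (holo_dilationBlock hf k).mono fun w hw =>
      mem_uD_of_norm_le_rseq (mem_ball_zero_iff.1 hw).le
  · simp only [Set.indicator_of_notMem hk]
    exact differentiableOn_const 0

theorem LogGrowth.norm_dilationPart_le (h : LogGrowth a A M) (ha0 : 0 ≤ a) (ha1 : a < 1)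
    (hA : 0 ≤ A) (hf : Holo f) (hM : ∀ k ∈ S, ∀ w, ‖w‖ ≤ rseq k → ‖f w‖ ≤ M k) {n : ℕ} {z : ℂ}
    (hz : ‖z‖ ≤ rseq (n + 1)) : ‖dilationPart f S z‖ ≤ M n * decompositionBound a A :=
  (tsum_of_norm_bounded ((summable_blockMajorant a A n).hasSum.mul_left (M n))
    (h.norm_indicator_dilationBlock_le ha0 hA hf hM hz)).trans
    (mul_le_mul_of_nonneg_left (tsum_blockMajorant_le ha0 ha1 A n) (h.nonneg n))

end DilationParts

section Weights

variable {u : ℂ → ℝ} {a A c : ℝ}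

theorem NonInc.div_le_div_rseq (hu : NonInc u) (hpos : ∀ z ∈ uD, 0 < u z) (hc : 0 ≤ c) {k : ℕ}
    {z : ℂ} (hz : ‖z‖ ≤ rseq k) : c / u z ≤ c / u (rseq k) :=
  div_le_div_of_nonneg_left hc (hpos _ (rseq_mem_uD k))
    (hu z (mem_uD_of_norm_le_rseq hz) _ (rseq_mem_uD k) (by rwa [norm_rseq]))

theorem logGrowth_div_rseq (hpos : ∀ z ∈ uD, 0 < u z) (h₁ : Log1 A u) (h₂ : Log2 a u)
    (hc : 0 ≤ c) : LogGrowth a A fun k => c / u (rseq k) where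
  nonneg k := div_nonneg hc (hpos _ (rseq_mem_uD k)).le
  le_mul_succ k := by
    have hk := hpos _ (rseq_mem_uD k)
    have hk' := hpos _ (rseq_mem_uD (k + 1))
    rw [mul_div_assoc', div_le_div_iff₀ hk hk']
    linarith [mul_le_mul_of_nonneg_left (h₂ k) hc]
  succ_le_mul k := by
    have hk := hpos _ (rseq_mem_uD k)
    have hk' := hpos _ (rseq_mem_uD (k + 1))
    rw [mul_div_assoc', div_le_div_iff₀ hk' hk]
    linarith [mul_le_mul_of_nonneg_left (h₁ k) hc]

theorem NonInc.mul_norm_dilationPart_le (hu : NonInc u) (hpos : ∀ z ∈ uD, 0 < u z)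
    (h : LogGrowth a A fun k => c / u (rseq k)) (ha0 : 0 ≤ a) (ha1 : a < 1) (hA : 0 ≤ A)
    {f : ℂ → ℂ} (hf : Holo f) {S : Set ℕ}
    (hM : ∀ k ∈ S, ∀ w, ‖w‖ ≤ rseq k → ‖f w‖ ≤ c / u (rseq k)) {z : ℂ} (hz : z ∈ uD) :
    u z * ‖dilationPart f S z‖ ≤ decompositionBound a A * c := by
  obtain ⟨n, hnz, hzn⟩ := exists_rseq_le_norm_lt_rseq_succ hz
  have hn : 0 < u (rseq n) := hpos _ (rseq_mem_uD n)
  calc u z * ‖dilationPart f S z‖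
    _ ≤ u (rseq n) * (c / u (rseq n) * decompositionBound a A) := by
      gcongr
      · exact hu _ (rseq_mem_uD n) z hz (by rwa [norm_rseq])
      · exact h.norm_dilationPart_le ha0 ha1 hA hf hM hzn.le
    _ = decompositionBound a A * c := by field_simp

end Weights

theorem decomposition_constant_general {a A : ℝ} (ha0 : 0 ≤ a) (ha1 : a < 1) (hA : 0 ≤ A) :
    ∃ T > 0, ∀ u₀ u₁ : ℂ → ℝ,
      (∀ z ∈ uD, 0 < u₀ z) → NonInc u₀ → Log1 A u₀ → Log2 a u₀ →
      (∀ z ∈ uD, 0 < u₁ z) → NonInc u₁ → Log1 A u₁ → Log2 a u₁ →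
      ∀ c₀ c₁ : ℝ, 0 ≤ c₀ → 0 ≤ c₁ →
      ∀ f : ℂ → ℂ, Holo f →
        (∀ z ∈ uD, ‖f z‖ ≤ max (c₀ / u₀ z) (c₁ / u₁ z)) →
        ∃ h₀ h₁ : ℂ → ℂ, Holo h₀ ∧ Holo h₁ ∧ (∀ z ∈ uD, f z = h₀ z + h₁ z) ∧
          (∀ z ∈ uD, u₀ z * ‖h₀ z‖ ≤ T * c₀) ∧
          (∀ z ∈ uD, u₁ z * ‖h₁ z‖ ≤ T * c₁) := by
  refine ⟨decompositionBound a A, decompositionBound_pos ha1 hA, ?_⟩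
  intro u₀ u₁ hu₀ hn₀ hA₀ ha₀ hu₁ hn₁ hA₁ ha₁ c₀ c₁ hc₀ hc₁ f hf hfle
  have hM₀ := logGrowth_div_rseq hu₀ hA₀ ha₀ hc₀
  have hM₁ := logGrowth_div_rseq hu₁ hA₁ ha₁ hc₁
  have hmax : ∀ k z, ‖z‖ ≤ rseq k → ‖f z‖ ≤ max (c₀ / u₀ (rseq k)) (c₁ / u₁ (rseq k)) :=
    fun k z hz => (hfle z (mem_uD_of_norm_le_rseq hz)).trans
      (max_le_max (hn₀.div_le_div_rseq hu₀ hc₀ hz) (hn₁.div_le_div_rseq hu₁ hc₁ hz))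
  let S : Set ℕ := {k | c₁ / u₁ (rseq k) ≤ c₀ / u₀ (rseq k)}
  have hS : ∀ k ∈ S, ∀ z, ‖z‖ ≤ rseq k → ‖f z‖ ≤ c₀ / u₀ (rseq k) :=
    fun k hk z hz => (hmax k z hz).trans_eq (max_eq_left hk)
  have hSc : ∀ k ∈ Sᶜ, ∀ z, ‖z‖ ≤ rseq k → ‖f z‖ ≤ c₁ / u₁ (rseq k) :=
    fun k hk z hz => (hmax k z hz).trans_eq (max_eq_right (le_of_not_ge hk))
  exact ⟨dilationPart f S, dilationPart f Sᶜ,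
    hM₀.holo_dilationPart ha0 hA hf hS, hM₁.holo_dilationPart ha0 hA hf hSc,
    fun z hz => hf.eq_dilationPart_add_compl hz
      (hM₀.summable_indicator_dilationBlock ha0 hA hf hS hz)
      (hM₁.summable_indicator_dilationBlock ha0 hA hf hSc hz),
    fun z hz => hn₀.mul_norm_dilationPart_le hu₀ hM₀ ha0 ha1 hA hf hS hz,
    fun z hz => hn₁.mul_norm_dilationPart_le hu₁ hM₁ ha0 ha1 hA hf hSc hz⟩

/-- decomposition theorem with a constant T depending only on a and A. -/
theorem decomposition_constant (a' A : ℝ) (ha0 : 0 < a') (ha1 : a' < 1) (hA : 1 < A) :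
    ∃ T > 0, ∀ u₀ u₁ : ℂ → ℝ,
      IsWeight u₀ → Radial u₀ → NonInc u₀ → Log1 A u₀ → Log2 a' u₀ →
      IsWeight u₁ → Radial u₁ → NonInc u₁ → Log1 A u₁ → Log2 a' u₁ →
      ∀ c₀ c₁ : ℝ, 0 < c₀ → 0 < c₁ →
      ∀ f : ℂ → ℂ, Holo f →
        (∀ z ∈ uD, ‖f z‖ ≤ max (c₀ / u₀ z) (c₁ / u₁ z)) →
        ∃ h₀ h₁ : ℂ → ℂ, Holo h₀ ∧ Holo h₁ ∧ (∀ z ∈ uD, f z = h₀ z + h₁ z) ∧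
          (∀ z ∈ uD, u₀ z * ‖h₀ z‖ ≤ T * c₀) ∧
          (∀ z ∈ uD, u₁ z * ‖h₁ z‖ ≤ T * c₁) := by
  obtain ⟨T, hT, h⟩ := decomposition_constant_general ha0.le ha1 (zero_le_one.trans hA.le)
  exact ⟨T, hT, fun u₀ u₁ hu₀ _ hn₀ hA₀ ha₀ hu₁ _ hn₁ hA₁ ha₁ c₀ c₁ hc₀ hc₁ =>
    h u₀ u₁ hu₀.2 hn₀ hA₀ ha₀ hu₁.2 hn₁ hA₁ ha₁ c₀ c₁ hc₀.le hc₁.le⟩
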